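/- arXiv:1912.01283 — 2 statements merged into one kernel-verified Lean document; each statement's English description precedes it below -/
import Mathlib

section
/- Let Ω ⊂ ℝ^N (N ≥ 3) be a bounded open set with C² boundary and δ(x) := dist(x, ∂Ω). Then there exist constants c > 0 and β₀ > 0 such that for every β ∈ (0,β₀), every y ∈ ℝ^N and every r > 0: H^{N−1}(Σ_β ∩ B_r(y)) ≤ c r^{N−1}, where Σ_β := {x ∈ Ω : δ(x) = β}. -/
open MeasureTheory Metric Set

/-- `Ω` has `C²` boundary: near each boundary point, `Ω` coincides with the strict
sublevel set of a `C²` function with nonvanishing derivative. -/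
def HasC2Boundary {N : ℕ} (Ω : Set (EuclideanSpace ℝ (Fin N))) : Prop :=
  ∀ p ∈ frontier Ω, ∃ (U : Set (EuclideanSpace ℝ (Fin N)))
    (f : EuclideanSpace ℝ (Fin N) → ℝ),
    IsOpen U ∧ p ∈ U ∧ ContDiffOn ℝ 2 f U ∧ (∀ x ∈ U, fderiv ℝ f x ≠ 0) ∧
    Ω ∩ U = {x ∈ U | f x < 0}

/-!
If `x` and `x'` lie at the same small distance `β` from the boundary and `q` is a boundary point
nearest to `x`, then `q + (x' - x)` is at distance `β` from `x'`, hence in the closure of `Ω`.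
So `x' - x` is also a difference between a point of the closure and a boundary point, and such
differences, near a boundary point `p`, stay in the flat half-cone `a v ≤ η ‖v‖`, where `a` is the
derivative at `p` of a defining function. Exchanging `x` and `x'` gives `|a (x' - x)| ≤ η ‖x' - x‖`:
near `p` the level set is a Lipschitz graph over `ker a`, with constant independent of `β`.
Compactness of the boundary reduces the estimate to finitely many such graphs.
-/

open Filter Module Topology
open scoped NNReal ENNReal

section AhlforsRegular

variable {X Y : Type*} [MetricSpace X] [MeasurableSpace X] [BorelSpace X]
  [MetricSpace Y] [MeasurableSpace Y] [BorelSpace Y]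

/-- Upper Ahlfors regularity of dimension `d` with constant `c`: the `d`-dimensional Hausdorff
measure of the part of `S` in a ball of radius `r` is at most `c * r ^ d`. Closed balls centred
anywhere in `X` are used, so that the notion passes through Lipschitz maps of any constant. -/
def IsUpperAhlforsRegularWith (d : ℝ) (c : ℝ≥0) (S : Set X) : Prop :=
  ∀ (y : X) (r : ℝ≥0), μH[d] (S ∩ closedBall y r) ≤ c * (r : ℝ≥0∞) ^ d

namespace IsUpperAhlforsRegularWith

variable {d : ℝ} {c c' : ℝ≥0} {S T : Set X}

theorem empty : IsUpperAhlforsRegularWith d c (∅ : Set X) := fun y r => by simp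

theorem mono (hT : IsUpperAhlforsRegularWith d c T) (h : S ⊆ T) :
    IsUpperAhlforsRegularWith d c S :=
  fun y r => (measure_mono (inter_subset_inter_left _ h)).trans (hT y r)

theorem union (hS : IsUpperAhlforsRegularWith d c S) (hT : IsUpperAhlforsRegularWith d c' T) :
    IsUpperAhlforsRegularWith d (c + c') (S ∪ T) := fun y r => by
  rw [union_inter_distrib_right, ENNReal.coe_add, add_mul]
  exact (measure_union_le _ _).trans (add_le_add (hS y r) (hT y r))

theorem of_antilipschitzWith_domRestrict {f : X → Y} {K L : ℝ≥0} (hd : 0 ≤ d)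
    (hf : LipschitzWith L f) (hfS : AntilipschitzWith K (S.domRestrict f))
    (hS : IsUpperAhlforsRegularWith d c (f '' S)) :
    IsUpperAhlforsRegularWith d (K ^ d * c * L ^ d) S := fun y r => by
  have himage : S.domRestrict f '' (Subtype.val ⁻¹' closedBall y r) ⊆
      f '' S ∩ closedBall (f y) (L * r : ℝ≥0) := by
    rintro _ ⟨x, hx, rfl⟩
    exact ⟨mem_image_of_mem f x.2, hf.mapsTo_closedBall y r hx⟩
  calc μH[d] (S ∩ closedBall y r)
      = μH[d] (Subtype.val ⁻¹' closedBall y r : Set S) := by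
        rw [← Subtype.image_preimage_coe, isometry_subtype_coe.hausdorffMeasure_image (.inl hd)]
    _ ≤ K ^ d * μH[d] (S.domRestrict f '' (Subtype.val ⁻¹' closedBall y r)) :=
        hfS.le_hausdorffMeasure_image hd _
    _ ≤ K ^ d * (c * (L * r : ℝ≥0) ^ d) := by
        gcongr
        exact (measure_mono himage).trans (hS _ _)
    _ = (K ^ d * c * L ^ d : ℝ≥0) * r ^ d := by
        push_cast [ENNReal.coe_rpow_of_nonneg _ hd]
        rw [ENNReal.mul_rpow_of_nonneg _ _ hd]
        ring

end IsUpperAhlforsRegularWith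

theorem exists_isUpperAhlforsRegularWith_univ (E : Type*) [NormedAddCommGroup E] [NormedSpace ℝ E]
    [FiniteDimensional ℝ E] [MeasurableSpace E] [BorelSpace E] :
    ∃ c : ℝ≥0, IsUpperAhlforsRegularWith (finrank ℝ E) c (univ : Set E) := by
  refine ⟨(μH[finrank ℝ E] (ball (0 : E) 1)).toNNReal, fun y r => ?_⟩
  rw [univ_inter, Measure.addHaar_closedBall _ _ r.coe_nonneg,
    ENNReal.coe_toNNReal measure_ball_lt_top.ne, mul_comm, ENNReal.ofReal_pow r.coe_nonneg,
    ENNReal.ofReal_coe_nnreal, ENNReal.rpow_natCast]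

end AhlforsRegular

section FlatCone

theorem antilipschitzWith_domRestrict_projKerOfRightInverse {𝕜 E F : Type*}
    [NontriviallyNormedField 𝕜] [NormedAddCommGroup E] [NormedSpace 𝕜 E]
    [NormedAddCommGroup F] [NormedSpace 𝕜 F]
    {a : E →L[𝕜] F} {b : F →L[𝕜] E} (hab : Function.RightInverse b a) {η : ℝ≥0}
    (hη : ‖b‖₊ * η < 1) {S : Set E}
    (hS : ∀ x ∈ S, ∀ x' ∈ S, ‖a (x' - x)‖ ≤ η * ‖x' - x‖) :
    AntilipschitzWith (1 - ‖b‖₊ * η)⁻¹ (S.domRestrict (a.projKerOfRightInverse b hab)) := by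
  refine AntilipschitzWith.of_le_mul_dist fun x' x => ?_
  set P := a.projKerOfRightInverse b hab
  set w : E := x' - x
  have hsplit : ‖w‖ ≤ ‖P w‖ + ‖b‖ * η * ‖w‖ :=
    calc ‖w‖ = ‖(P w : E) + b (a w)‖ := by simp [P]
      _ ≤ ‖(P w : E)‖ + ‖b (a w)‖ := norm_add_le _ _
      _ ≤ ‖P w‖ + ‖b‖ * ‖a w‖ := by gcongr; exacts [le_rfl, b.le_opNorm _]
      _ ≤ ‖P w‖ + ‖b‖ * η * ‖w‖ := by
        rw [mul_assoc]
        gcongr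
        exact hS x x.2 x' x'.2
  have hpos : 0 < 1 - ‖b‖ * η := sub_pos.2 (by exact_mod_cast hη)
  have hP : dist (S.domRestrict P x') (S.domRestrict P x) = ‖P w‖ := by
    change dist (P x') (P x) = ‖P w‖
    rw [dist_eq_norm, ← map_sub]
  rw [hP, Subtype.dist_eq, dist_eq_norm, NNReal.coe_inv, NNReal.coe_sub hη.le, NNReal.coe_one,
    NNReal.coe_mul, coe_nnnorm, ← div_eq_inv_mul, le_div_iff₀ hpos]
  linarith

theorem exists_isUpperAhlforsRegularWith_of_norm_map_sub_le {E F : Type*}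
    [NormedAddCommGroup E] [NormedSpace ℝ E] [FiniteDimensional ℝ E] [MeasurableSpace E]
    [BorelSpace E] [NormedAddCommGroup F] [NormedSpace ℝ F] [FiniteDimensional ℝ F]
    (a : E →L[ℝ] F) (ha : Function.Surjective a) :
    ∃ η : ℝ≥0, 0 < η ∧ ∃ c : ℝ≥0, ∀ S : Set E,
      (∀ x ∈ S, ∀ x' ∈ S, ‖a (x' - x)‖ ≤ η * ‖x' - x‖) →
        IsUpperAhlforsRegularWith (finrank ℝ (a : E →ₗ[ℝ] F).ker) c S := by
  obtain ⟨b, hab⟩ := a.exists_rightInverse_of_surjective (LinearMap.range_eq_top.2 ha)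
  replace hab : Function.RightInverse b a := DFunLike.congr_fun hab
  obtain ⟨η, hη, hbη⟩ : ∃ η : ℝ≥0, 0 < η ∧ ‖b‖₊ * η < 1 :=
    ⟨(‖b‖₊ + 1)⁻¹, by positivity, by
      rw [← div_eq_mul_inv, div_lt_one (by positivity)]; exact lt_add_one _⟩
  obtain ⟨c, hc⟩ := exists_isUpperAhlforsRegularWith_univ (a : E →ₗ[ℝ] F).ker
  exact ⟨η, hη, _, fun S hS => .of_antilipschitzWith_domRestrict (Nat.cast_nonneg _)
    (a.projKerOfRightInverse b hab).lipschitz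
    (antilipschitzWith_domRestrict_projKerOfRightInverse hab hbη hS)
    (hc.mono (subset_univ _))⟩

end FlatCone

section ParallelSet

/-- The part of the level set `{x ∈ Ω | dist(x, ∂Ω) = β}` lying over `t`, that is, formed by the
points having a nearest boundary point in `t`. It localizes the level set near the boundary. -/
def innerParallelSet {X : Type*} [PseudoMetricSpace X] (Ω : Set X) (β : ℝ) (t : Set X) : Set X :=
  {x ∈ Ω | infDist x (frontier Ω) = β ∧ ∃ q ∈ frontier Ω ∩ t, dist x q = β}

section MetricSpace

variable {X : Type*} [PseudoMetricSpace X] {Ω s t : Set X} {β : ℝ}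

theorem innerParallelSet_empty : innerParallelSet Ω β ∅ = ∅ := by
  simp [innerParallelSet]

theorem innerParallelSet_mono (h : s ⊆ t) : innerParallelSet Ω β s ⊆ innerParallelSet Ω β t :=
  fun _ ⟨hx, hxβ, q, hq, hxq⟩ => ⟨hx, hxβ, q, ⟨hq.1, h hq.2⟩, hxq⟩

theorem innerParallelSet_union_subset :
    innerParallelSet Ω β (s ∪ t) ⊆ innerParallelSet Ω β s ∪ innerParallelSet Ω β t := by
  rintro x ⟨hx, hxβ, q, ⟨hq, hqs | hqt⟩, hxq⟩
  · exact .inl ⟨hx, hxβ, q, ⟨hq, hqs⟩, hxq⟩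
  · exact .inr ⟨hx, hxβ, q, ⟨hq, hqt⟩, hxq⟩

theorem innerParallelSet_frontier (hΩ : IsCompact (frontier Ω)) (hβ : 0 < β) :
    innerParallelSet Ω β (frontier Ω) = {x ∈ Ω | infDist x (frontier Ω) = β} := by
  refine Subset.antisymm (fun x hx => ⟨hx.1, hx.2.1⟩) fun x ⟨hx, hxβ⟩ => ?_
  have hne : (frontier Ω).Nonempty := by
    by_contra! hempty
    rw [hempty, infDist_empty] at hxβ
    exact hβ.ne hxβ
  obtain ⟨q, hq, hxq⟩ := hΩ.exists_infDist_eq_dist hne x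
  exact ⟨hx, hxβ, q, ⟨hq, hq⟩, hxq.symm.trans hxβ⟩

end MetricSpace

theorem subset_of_isPreconnected_of_disjoint_frontier {X : Type*} [TopologicalSpace X] {s t : Set X}
    (ht : IsPreconnected t) (hts : Disjoint t (frontier s)) (hne : (t ∩ s).Nonempty) : t ⊆ s := by
  have hcover : t ⊆ interior s ∪ interior sᶜ := by
    rw [← compl_frontier_eq_union_interior]
    exact hts.subset_compl_right
  have hne' : (t ∩ interior s).Nonempty := by
    obtain ⟨x, hxt, hxs⟩ := hne
    exact ⟨x, hxt, (hcover hxt).resolve_right fun h => interior_subset h hxs⟩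
  exact (ht.subset_left_of_subset_union isOpen_interior isOpen_interior
    (disjoint_compl_right.mono interior_subset interior_subset) hcover hne').trans interior_subset

variable {E : Type*} [NormedAddCommGroup E] [NormedSpace ℝ E] {Ω : Set E}

theorem closedBall_infDist_frontier_subset_closure {x : E} (hx : x ∈ Ω)
    (hpos : 0 < infDist x (frontier Ω)) :
    closedBall x (infDist x (frontier Ω)) ⊆ closure Ω := by
  rw [← closure_ball x hpos.ne']
  exact closure_mono (subset_of_isPreconnected_of_disjoint_frontier (convex_ball x _).isPreconnected
    disjoint_ball_infDist ⟨x, mem_ball_self hpos, hx⟩)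

theorem map_sub_le_of_mem_innerParallelSet {a : E →L[ℝ] ℝ} {η ρ : ℝ} {p : E}
    (hcone : ∀ q ∈ ball p ρ, ∀ w ∈ ball p ρ, q ∈ frontier Ω → w ∈ closure Ω →
      a (w - q) ≤ η * ‖w - q‖) {β : ℝ} (hβ : 0 < β) (hβρ : β < ρ / 4) {x x' : E}
    (hx : x ∈ innerParallelSet Ω β (ball p (ρ / 2)))
    (hx' : x' ∈ innerParallelSet Ω β (ball p (ρ / 2))) :
    a (x' - x) ≤ η * ‖x' - x‖ := by
  obtain ⟨-, -, q, ⟨hq, hqp⟩, hxq⟩ := hx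
  obtain ⟨hx', hx'β, q', ⟨-, hq'p⟩, hx'q'⟩ := hx'
  have hdist : dist (q + (x' - x)) x' = β := by
    rw [← hxq, dist_comm x, dist_eq_norm, dist_eq_norm]
    congr 1
    abel
  have hclosure : q + (x' - x) ∈ closure Ω :=
    closedBall_infDist_frontier_subset_closure hx' (hx'β ▸ hβ) (hx'β ▸ hdist.le)
  have hball : q + (x' - x) ∈ ball p ρ := by
    have := dist_triangle4 (q + (x' - x)) x' q' p
    rw [mem_ball] at hq'p ⊢
    linarith
  simpa using hcone q (ball_subset_ball (by linarith) hqp) _ hball hq hclosure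

end ParallelSet

section C1Boundary

variable {E : Type*} [NormedAddCommGroup E] [NormedSpace ℝ E] {Ω : Set E} {p : E}

/-- `Ω` has `C¹` boundary: the germ of `Ω` at each boundary point `p` is that of the strict sublevel
set of a function of class `C¹` near `p` whose derivative at `p` does not vanish. Germs are
used so that no neighbourhood of `p` has to be named; the condition makes `∂Ω` flat near `p`. -/
def HasC1Boundary (Ω : Set E) : Prop :=
  ∀ p ∈ frontier Ω, ∃ f : E → ℝ, ContDiffAt ℝ 1 f p ∧ fderiv ℝ f p ≠ 0 ∧
    ∀ᶠ x in 𝓝 p, x ∈ Ω ↔ f x < 0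

theorem HasC2Boundary.hasC1Boundary {N : ℕ} {Ω : Set (EuclideanSpace ℝ (Fin N))}
    (hΩ : HasC2Boundary Ω) : HasC1Boundary Ω := by
  intro p hp
  obtain ⟨U, f, hU, hpU, hf, hf', hΩU⟩ := hΩ p hp
  refine ⟨f, (hf.contDiffAt (hU.mem_nhds hpU)).of_le one_le_two, hf' p hpU, ?_⟩
  filter_upwards [hU.mem_nhds hpU] with x hx
  simpa [hx] using Set.ext_iff.1 hΩU x

theorem nonpos_of_mem_closure {X : Type*} [TopologicalSpace X] {Ω : Set X} {f : X → ℝ} {w : X}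
    (hf : ContinuousAt f w) (hΩ : ∀ᶠ x in 𝓝 w, x ∈ Ω → f x ≤ 0) (hw : w ∈ closure Ω) :
    f w ≤ 0 :=
  isClosed_Iic.mem_of_frequently_of_tendsto
    (((mem_closure_iff_frequently.1 hw).and_eventually hΩ).mono fun _ h => h.2 h.1) hf

theorem HasC1Boundary.exists_eventually_map_sub_le (hΩ : HasC1Boundary Ω) (hp : p ∈ frontier Ω) :
    ∃ a : E →L[ℝ] ℝ, a ≠ 0 ∧ ∀ η > 0, ∀ᶠ z : E × E in 𝓝 (p, p),
      z.1 ∈ frontier Ω → z.2 ∈ closure Ω → a (z.2 - z.1) ≤ η * ‖z.2 - z.1‖ := by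
  obtain ⟨f, hf, hf', hfΩ⟩ := hΩ p hp
  refine ⟨fderiv ℝ f p, hf', fun η hη => ?_⟩
  have hcont : ∀ᶠ w in 𝓝 p, ContinuousAt f w :=
    (hf.eventually (by simp)).mono fun w hw => hw.continuousAt
  have hnonpos : ∀ᶠ w in 𝓝 p, w ∈ closure Ω → f w ≤ 0 := by
    filter_upwards [hcont, hfΩ.eventually_nhds] with w hw hwΩ
    exact nonpos_of_mem_closure hw (hwΩ.mono fun x hx hxΩ => (hx.1 hxΩ).le)
  have hnonneg : ∀ᶠ q in 𝓝 p, q ∈ frontier Ω → 0 ≤ f q := by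
    filter_upwards [hcont, hfΩ.eventually_nhds] with q hq hqΩ hqf
    rw [frontier_eq_closure_inter_closure] at hqf
    exact neg_nonpos.1 (nonpos_of_mem_closure (f := -f) hq.neg
      (hqΩ.mono fun x hx hxΩ => neg_nonpos.2 (not_lt.1 (mt hx.2 hxΩ))) hqf.2)
  have hstrict := (hf.hasStrictFDerivAt one_ne_zero).isLittleO.def hη
  filter_upwards [continuous_swap.continuousAt.eventually hstrict,
    continuous_fst.continuousAt.eventually hnonneg,
    continuous_snd.continuousAt.eventually hnonpos] with ⟨q, w⟩ hqw hq hw hqΩ hwΩ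
  have := neg_le_of_abs_le hqw
  simp only [Prod.fst_swap, Prod.snd_swap] at this
  linarith [hq hqΩ, hw hwΩ]

variable [FiniteDimensional ℝ E] [MeasurableSpace E] [BorelSpace E]

theorem HasC1Boundary.exists_mem_nhds_isUpperAhlforsRegularWith_innerParallelSet
    (hΩ : HasC1Boundary Ω) (hp : p ∈ frontier Ω) :
    ∃ t ∈ 𝓝 p, ∃ c : ℝ≥0, ∀ᶠ β in 𝓝[>] (0 : ℝ),
      IsUpperAhlforsRegularWith (finrank ℝ E - 1 : ℕ) c (innerParallelSet Ω β t) := by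
  obtain ⟨a, ha, hcone⟩ := hΩ.exists_eventually_map_sub_le hp
  have ha' : (a : Module.Dual ℝ E) ≠ 0 := ContinuousLinearMap.coe_injective.ne ha
  have hdim : finrank ℝ E - 1 = finrank ℝ (a : E →ₗ[ℝ] ℝ).ker :=
    Nat.sub_eq_of_eq_add (Module.Dual.finrank_ker_add_one_of_ne_zero ha').symm
  obtain ⟨η, hη, c, hregular⟩ :=
    exists_isUpperAhlforsRegularWith_of_norm_map_sub_le a (LinearMap.surjective ha')
  obtain ⟨ρ, hρ, hball⟩ := Metric.mem_nhds_iff.1 (hcone η (NNReal.coe_pos.2 hη))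
  rw [← ball_prod_same] at hball
  refine ⟨ball p (ρ / 2), ball_mem_nhds p (by positivity), c, ?_⟩
  filter_upwards [Ioo_mem_nhdsGT (show 0 < ρ / 4 by positivity)] with β hβ
  have hle : ∀ x ∈ innerParallelSet Ω β (ball p (ρ / 2)),
      ∀ x' ∈ innerParallelSet Ω β (ball p (ρ / 2)), a (x' - x) ≤ η * ‖x' - x‖ :=
    fun x hx x' hx' => map_sub_le_of_mem_innerParallelSet
      (fun q hq w hw => hball (mk_mem_prod hq hw)) hβ.1 hβ.2 hx hx'
  rw [hdim]
  refine hregular _ fun x hx x' hx' => abs_le'.2 ⟨hle x hx x' hx', ?_⟩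
  rw [← map_neg, neg_sub, norm_sub_rev]
  exact hle x' hx' x hx

theorem HasC1Boundary.exists_eventually_isUpperAhlforsRegularWith (hΩ : HasC1Boundary Ω)
    (hcompact : IsCompact (frontier Ω)) :
    ∃ c : ℝ≥0, ∀ᶠ β in 𝓝[>] (0 : ℝ), IsUpperAhlforsRegularWith (finrank ℝ E - 1 : ℕ) c
      {x ∈ Ω | infDist x (frontier Ω) = β} := by
  suffices ∃ c : ℝ≥0, ∀ᶠ β in 𝓝[>] (0 : ℝ), IsUpperAhlforsRegularWith (finrank ℝ E - 1 : ℕ) c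
      (innerParallelSet Ω β (frontier Ω)) by
    obtain ⟨c, hc⟩ := this
    refine ⟨c, ?_⟩
    filter_upwards [hc, self_mem_nhdsWithin] with β hβ hβ0
    rwa [← innerParallelSet_frontier hcompact hβ0]
  refine hcompact.induction_on
    (p := fun t => ∃ c : ℝ≥0, ∀ᶠ β in 𝓝[>] (0 : ℝ),
      IsUpperAhlforsRegularWith (finrank ℝ E - 1 : ℕ) c (innerParallelSet Ω β t))
    ⟨0, .of_forall fun β => by rw [innerParallelSet_empty]; exact .empty⟩ ?_ ?_ ?_
  · rintro s t hst ⟨c, hc⟩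
    exact ⟨c, hc.mono fun β hβ => hβ.mono (innerParallelSet_mono hst)⟩
  · rintro s t ⟨c, hc⟩ ⟨c', hc'⟩
    refine ⟨c + c', ?_⟩
    filter_upwards [hc, hc'] with β hβ hβ'
    exact (hβ.union hβ').mono innerParallelSet_union_subset
  · intro p hp
    obtain ⟨t, ht, hregular⟩ := hΩ.exists_mem_nhds_isUpperAhlforsRegularWith_innerParallelSet hp
    exact ⟨t, mem_nhdsWithin_of_mem_nhds ht, hregular⟩

theorem stmt12_general (hΩ : HasC1Boundary Ω) (hcompact : IsCompact (frontier Ω)) :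
    ∃ c : ℝ, 0 < c ∧ ∃ β₀ : ℝ, 0 < β₀ ∧
      ∀ β ∈ Ioo (0 : ℝ) β₀, ∀ y : E, ∀ r : ℝ, 0 < r →
        μH[(finrank ℝ E - 1 : ℕ)] ({x ∈ Ω | infDist x (frontier Ω) = β} ∩ ball y r) ≤
          ENNReal.ofReal (c * r ^ (finrank ℝ E - 1)) := by
  obtain ⟨c, hc⟩ := hΩ.exists_eventually_isUpperAhlforsRegularWith hcompact
  obtain ⟨β₀, hβ₀, hregular⟩ := mem_nhdsGT_iff_exists_Ioo_subset.1 hc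
  refine ⟨c + 1, by positivity, β₀, hβ₀, fun β hβ y r hr => ?_⟩
  lift r to ℝ≥0 using hr.le
  calc μH[(finrank ℝ E - 1 : ℕ)] ({x ∈ Ω | infDist x (frontier Ω) = β} ∩ ball y r)
      ≤ μH[(finrank ℝ E - 1 : ℕ)] ({x ∈ Ω | infDist x (frontier Ω) = β} ∩ closedBall y r) :=
        measure_mono (inter_subset_inter_right _ ball_subset_closedBall)
    _ ≤ c * (r : ℝ≥0∞) ^ ((finrank ℝ E - 1 : ℕ) : ℝ) := hregular hβ y r
    _ = ENNReal.ofReal (c * r ^ (finrank ℝ E - 1)) := by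
        rw [ENNReal.rpow_natCast, ENNReal.ofReal_mul c.coe_nonneg, ENNReal.ofReal_pow r.coe_nonneg,
          ENNReal.ofReal_coe_nnreal, ENNReal.ofReal_coe_nnreal]
    _ ≤ ENNReal.ofReal ((c + 1) * r ^ (finrank ℝ E - 1)) := by
        gcongr
        exact le_add_of_nonneg_right zero_le_one

end C1Boundary

theorem stmt12 {N : ℕ} (hN : 3 ≤ N) (Ω : Set (EuclideanSpace ℝ (Fin N)))
    (hΩo : IsOpen Ω) (hΩb : Bornology.IsBounded Ω) (hΩ2 : HasC2Boundary Ω) :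
    ∃ c : ℝ, 0 < c ∧ ∃ β₀ : ℝ, 0 < β₀ ∧
      ∀ β ∈ Set.Ioo (0:ℝ) β₀, ∀ y : EuclideanSpace ℝ (Fin N), ∀ r : ℝ, 0 < r →
        μH[(N:ℝ) - 1] ({x ∈ Ω | Metric.infDist x (frontier Ω) = β} ∩ Metric.ball y r) ≤
          ENNReal.ofReal (c * r ^ (N - 1)) := by
  have hdim : ((N - 1 : ℕ) : ℝ) = N - 1 := Nat.cast_pred (by lia)
  simpa only [finrank_euclideanSpace_fin, hdim] using stmt12_general hΩ2.hasC1Boundary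
    (hΩb.isCompact_closure.of_isClosed_subset isClosed_frontier frontier_subset_closure)
end

section
/- Let Ω ⊂ ℝ^N (N ≥ 3) be a bounded open set with C² boundary and δ(x) := dist(x, ∂Ω). For every a ≥ 1 there exist constants c > 0 and β₀ > 0 (depending on Ω and a) such that for every β ∈ (0,β₀) and every y ∈ ℝ^N: ∫_{Σ_β ∩ {x : |x−y| < aβ}} |x−y|^{2−N} dH^{N−1}(x) ≤ c β. -/
open MeasureTheory Metric Set

/-!
A point of `Σ_β` is the centre of a ball of radius `β` that is contained in `Ω` and touches `∂Ω`.
If `x, x' ∈ Σ_β` are close to `p ∈ ∂Ω` and the ball around `x'` touches `∂Ω` at `q`, then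
`z = x + (q - x')` lies in the closed ball around `x`, so a defining function `f` of `Ω` near `p`
satisfies `f z ≤ 0 ≤ f q`, and its derivative `ℓ` at `p` satisfies
`ℓ (x' - x) = ℓ (q - z) ≥ -ε ‖x' - x‖`. Exchanging `x` and `x'`, `ℓ` is `ε`-Lipschitz on `Σ_β` near
`p`, hence a projection onto `ker ℓ` is bi-Lipschitz there, with constants independent of `β`. By
compactness of `∂Ω`, all `Σ_β` with `β` small are upper Ahlfors regular of dimension `N - 1` with a
common constant, and the integral is bounded by a geometric series over dyadic balls around `y`.
-/

open Filter Module
open scoped ENNReal NNReal Topology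

section UpperAhlforsRegular

variable {X : Type*} [PseudoMetricSpace X] [MeasurableSpace X] {μ ν : Measure X} {d s : ℝ}
  {C C' : ℝ≥0}

/-- The upper half of Ahlfors `d`-regularity, with constant `C`. The centres of the balls range over
the whole space, not only over the support of `μ`. -/
def IsUpperAhlforsRegular (μ : Measure X) (d : ℝ) (C : ℝ≥0) : Prop :=
  ∀ y, ∀ r > 0, μ (closedBall y r) ≤ C * ENNReal.ofReal (r ^ d)

namespace IsUpperAhlforsRegular

lemma mono_measure (hμ : IsUpperAhlforsRegular μ d C) (h : ν ≤ μ) :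
    IsUpperAhlforsRegular ν d C :=
  fun y r hr => (h _).trans (hμ y r hr)

lemma add (hμ : IsUpperAhlforsRegular μ d C) (hν : IsUpperAhlforsRegular ν d C') :
    IsUpperAhlforsRegular (μ + ν) d (C + C') := by
  intro y r hr
  rw [Measure.add_apply, ENNReal.coe_add, add_mul]
  exact add_le_add (hμ y r hr) (hν y r hr)

lemma restrict_inter_union {S V W : Set X}
    (hV : IsUpperAhlforsRegular (μ.restrict (S ∩ V)) d C)
    (hW : IsUpperAhlforsRegular (μ.restrict (S ∩ W)) d C') :
    IsUpperAhlforsRegular (μ.restrict (S ∩ (V ∪ W))) d (C + C') := by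
  rw [inter_union_distrib_left]
  exact (hV.add hW).mono_measure (Measure.restrict_union_le _ _)

lemma exists_eventually_restrict_inter_of_isCompact {ι : Type*} {l : Filter ι} {S : ι → Set X}
    {K : Set X} (hK : IsCompact K)
    (h : ∀ p ∈ K, ∃ C, ∃ V ∈ 𝓝 p, ∀ᶠ i in l, IsUpperAhlforsRegular (μ.restrict (S i ∩ V)) d C) :
    ∃ C, ∃ V ∈ 𝓝ˢ K, ∀ᶠ i in l, IsUpperAhlforsRegular (μ.restrict (S i ∩ V)) d C := by
  refine hK.induction_on (p := fun K => ∃ C, ∃ V ∈ 𝓝ˢ K,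
    ∀ᶠ i in l, IsUpperAhlforsRegular (μ.restrict (S i ∩ V)) d C) ?_ ?_ ?_ ?_
  · exact ⟨0, ∅, by simp, .of_forall fun i y r _ => by simp⟩
  · rintro K K' hKK' ⟨C, V, hV, hC⟩
    exact ⟨C, V, nhdsSet_mono hKK' hV, hC⟩
  · rintro K K' ⟨C, V, hV, hC⟩ ⟨C', V', hV', hC'⟩
    exact ⟨C + C', V ∪ V', union_mem_nhdsSet hV hV',
      (hC.and hC').mono fun i hi => hi.1.restrict_inter_union hi.2⟩
  · intro p hp
    obtain ⟨C, V, hV, hC⟩ := h p hp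
    exact ⟨interior V, mem_nhdsWithin_of_mem_nhds (interior_mem_nhds.2 hV), C, V,
      subset_interior_iff_mem_nhdsSet.1 subset_rfl, hC⟩

end IsUpperAhlforsRegular

lemma rpow_le_two_rpow_abs {t : ℝ} (ht : 1 / 2 ≤ t) (ht1 : t ≤ 1) : t ^ s ≤ 2 ^ |s| := by
  rcases le_total 0 s with hs | hs
  · exact (Real.rpow_le_one (by linarith) ht1 hs).trans
      (Real.one_le_rpow one_le_two (abs_nonneg s))
  · calc t ^ s ≤ (1 / 2) ^ s := Real.rpow_le_rpow_of_nonpos (by norm_num) ht hs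
      _ = 2 ^ |s| := by
        rw [one_div, Real.inv_rpow zero_le_two, ← Real.rpow_neg zero_le_two, abs_of_nonpos hs]

lemma exists_dyadic_rpow_le {t R : ℝ} (ht : 0 ≤ t) (htR : t ≤ R) (hR : 0 < R) :
    ∃ k : ℕ, t ≤ R * (1 / 2) ^ k ∧ t ^ s ≤ 2 ^ |s| * (R * (1 / 2) ^ k) ^ s := by
  rcases ht.eq_or_lt with rfl | ht
  · refine ⟨0, by simpa using hR.le, ?_⟩
    rcases eq_or_ne s 0 with rfl | hs
    · simp
    · rw [Real.zero_rpow hs]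
      positivity
  · obtain ⟨k, hk, hk'⟩ := exists_nat_pow_near_of_lt_one (div_pos ht hR) ((div_le_one hR).2 htR)
      (by norm_num : (0 : ℝ) < 1 / 2) (by norm_num)
    rw [lt_div_iff₀ hR, pow_succ] at hk
    rw [div_le_iff₀ hR, mul_comm] at hk'
    refine ⟨k, hk', ?_⟩
    set r := R * (1 / 2 : ℝ) ^ k
    have hr0 : 0 < r := by positivity
    have htr : 1 / 2 ≤ t / r := (le_div_iff₀ hr0).2 (by linarith)
    calc t ^ s = (t / r) ^ s * r ^ s := by
          rw [← Real.mul_rpow (by positivity) hr0.le, div_mul_cancel₀ _ hr0.ne']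
      _ ≤ 2 ^ |s| * r ^ s := by
          gcongr
          exact rpow_le_two_rpow_abs htr ((div_le_one hr0).2 hk')

lemma tsum_ofReal_dyadic_rpow {p : ℝ} (hp : 0 < p) {R : ℝ} (hR : 0 ≤ R) :
    ∑' k : ℕ, ENNReal.ofReal ((R * (1 / 2) ^ k) ^ p) =
      ENNReal.ofReal (R ^ p / (1 - (1 / 2) ^ p)) := by
  have hq : (1 / 2 : ℝ) ^ p < 1 := Real.rpow_lt_one (by norm_num) (by norm_num) hp
  have hterm (k : ℕ) : (R * (1 / 2) ^ k) ^ p = R ^ p * ((1 / 2) ^ p) ^ k := by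
    rw [Real.mul_rpow hR (by positivity), Real.rpow_pow_comm (by norm_num)]
  have hsum := (hasSum_geometric_of_lt_one (by positivity) hq).mul_left (R ^ p)
  simp only [hterm]
  rw [← ENNReal.ofReal_tsum_of_nonneg (fun k => by positivity) hsum.summable, hsum.tsum_eq,
    div_eq_mul_inv (R ^ p)]

lemma IsUpperAhlforsRegular.setLIntegral_dist_rpow_le (hμ : IsUpperAhlforsRegular μ d C)
    {A : Set X} {y : X} {r b : ℝ} (hr : 0 < r) (hA : A ⊆ closedBall y r)
    (hb : ∀ x ∈ A, dist x y ^ s ≤ b * r ^ s) :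
    ∫⁻ x in A, ENNReal.ofReal (dist x y ^ s) ∂μ ≤
      C * ENNReal.ofReal b * ENNReal.ofReal (r ^ (d + s)) := by
  calc ∫⁻ x in A, ENNReal.ofReal (dist x y ^ s) ∂μ
      ≤ ∫⁻ _ in A, ENNReal.ofReal (b * r ^ s) ∂μ :=
        setLIntegral_mono measurable_const fun x hx => ENNReal.ofReal_le_ofReal (hb x hx)
    _ = ENNReal.ofReal (b * r ^ s) * μ A := setLIntegral_const _ _
    _ ≤ ENNReal.ofReal (b * r ^ s) * (C * ENNReal.ofReal (r ^ d)) := by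
        gcongr
        exact (measure_mono hA).trans (hμ y r hr)
    _ = C * ENNReal.ofReal b * ENNReal.ofReal (r ^ (d + s)) := by
        rw [Real.rpow_add hr, ENNReal.ofReal_mul' (Real.rpow_nonneg hr.le s),
          ENNReal.ofReal_mul (Real.rpow_nonneg hr.le d)]
        ring

lemma IsUpperAhlforsRegular.lintegral_ball_dist_rpow_le (hμ : IsUpperAhlforsRegular μ d C)
    (hds : 0 < d + s) (y : X) {R : ℝ} (hR : 0 < R) :
    ∫⁻ x in ball y R, ENNReal.ofReal (dist x y ^ s) ∂μ ≤
      C * ENNReal.ofReal (2 ^ |s| / (1 - (1 / 2) ^ (d + s)) * R ^ (d + s)) := by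
  let r (k : ℕ) : ℝ := R * (1 / 2) ^ k
  let A (k : ℕ) : Set X := {x | dist x y ≤ r k ∧ dist x y ^ s ≤ 2 ^ |s| * r k ^ s}
  have hcover : ball y R ⊆ ⋃ k, A k := fun x hx =>
    mem_iUnion.2 (exists_dyadic_rpow_le dist_nonneg (mem_ball.1 hx).le hR)
  calc ∫⁻ x in ball y R, ENNReal.ofReal (dist x y ^ s) ∂μ
      ≤ ∫⁻ x in ⋃ k, A k, ENNReal.ofReal (dist x y ^ s) ∂μ := lintegral_mono_set hcover
    _ ≤ ∑' k, ∫⁻ x in A k, ENNReal.ofReal (dist x y ^ s) ∂μ := lintegral_iUnion_le _ _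
    _ ≤ ∑' k, C * ENNReal.ofReal (2 ^ |s|) * ENNReal.ofReal (r k ^ (d + s)) :=
        ENNReal.tsum_le_tsum fun k =>
          hμ.setLIntegral_dist_rpow_le (by positivity) (fun _ hx => hx.1) fun _ hx => hx.2
    _ = C * ENNReal.ofReal (2 ^ |s| / (1 - (1 / 2) ^ (d + s)) * R ^ (d + s)) := by
        rw [ENNReal.tsum_mul_left, tsum_ofReal_dyadic_rpow hds hR.le, mul_assoc,
          ← ENNReal.ofReal_mul (by positivity), mul_div_assoc', div_mul_eq_mul_div]

end UpperAhlforsRegular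

section BiLipschitz

variable {X Y Z : Type*} {S : Set X} {K L ε : ℝ≥0}

lemma antilipschitzWith_domRestrict_of_prodMk [PseudoMetricSpace X] [PseudoMetricSpace Y]
    [PseudoMetricSpace Z] {T : X → Y} {g : X → Z}
    (hTg : AntilipschitzWith K fun x => (T x, g x)) (hg : LipschitzOnWith ε g S) (hε : K * ε < 1) :
    AntilipschitzWith K (S.domRestrict T) := by
  refine AntilipschitzWith.of_le_mul_dist fun x x' => ?_
  have hdist : dist (x : X) x' ≤ K * max (dist (T x) (T x')) (dist (g x) (g x')) :=
    hTg.le_mul_dist (x : X) x'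
  rcases le_total (dist (g x) (g x')) (dist (T x) (T x')) with h | h
  · rwa [max_eq_left h] at hdist
  · rw [max_eq_right h] at hdist
    have hg' : (K : ℝ) * dist (g x) (g x') ≤ K * ε * dist (x : X) x' := by
      rw [mul_assoc]
      gcongr
      exact hg.dist_le_mul x x.2 x' x'.2
    have hε' : (K : ℝ) * ε < 1 := mod_cast hε
    have hzero : dist (x : X) x' ≤ 0 := by
      nlinarith [hε', dist_nonneg (x := (x : X)) (y := x')]
    exact hzero.trans (by positivity)

lemma isUpperAhlforsRegular_hausdorffMeasure_restrict [MetricSpace X] [MeasurableSpace X]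
    [BorelSpace X] {ι : Type*} [Fintype ι] {T : X → ι → ℝ} (hT : LipschitzWith L T)
    (hTS : AntilipschitzWith K (S.domRestrict T)) :
    IsUpperAhlforsRegular ((μH[Fintype.card ι] : Measure X).restrict S) (Fintype.card ι)
      ((K * (2 * L)) ^ Fintype.card ι) := by
  intro y r hr
  have hmaps : S.domRestrict T '' (Subtype.val ⁻¹' closedBall y r) ⊆ closedBall (T y) (L * r) := by
    rintro _ ⟨x, hx, rfl⟩
    exact hT.dist_le_mul_of_le hx
  have hball : μH[Fintype.card ι] (closedBall (T y) (L * r)) =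
      ENNReal.ofReal ((2 * (L * r)) ^ Fintype.card ι) := by
    rw [hausdorffMeasure_pi_real, Real.volume_pi_closedBall _ (by positivity)]
  calc (μH[Fintype.card ι] : Measure X).restrict S (closedBall y r)
      = μH[Fintype.card ι] (Subtype.val ⁻¹' closedBall y r : Set S) := by
        rw [Measure.restrict_apply isClosed_closedBall.measurableSet,
          isometry_subtype_coe.hausdorffMeasure_preimage (.inl (Nat.cast_nonneg _)),
          Subtype.range_coe]
    _ ≤ (K : ℝ≥0∞) ^ (Fintype.card ι : ℝ) *
          μH[Fintype.card ι] (S.domRestrict T '' (Subtype.val ⁻¹' closedBall y r)) :=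
        hTS.le_hausdorffMeasure_image (Nat.cast_nonneg _) _
    _ ≤ (K : ℝ≥0∞) ^ (Fintype.card ι : ℝ) * ENNReal.ofReal ((2 * (L * r)) ^ Fintype.card ι) := by
        rw [← hball]
        gcongr
    _ = ((K * (2 * L)) ^ Fintype.card ι : ℝ≥0) * ENNReal.ofReal (r ^ (Fintype.card ι : ℝ)) := by
        rw [ENNReal.rpow_natCast, Real.rpow_natCast, ← mul_assoc, mul_pow (2 * (L : ℝ)),
          ENNReal.ofReal_mul (by positivity), mul_pow K, ENNReal.coe_mul, mul_assoc,
          ENNReal.ofReal_eq_coe_nnreal (by positivity : (0 : ℝ) ≤ (2 * L) ^ Fintype.card ι)]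
        rfl

lemma exists_antilipschitzWith_prodMk {E : Type*} [NormedAddCommGroup E] [NormedSpace ℝ E]
    [FiniteDimensional ℝ E] (ℓ : E →L[ℝ] ℝ) :
    ∃ T : E →L[ℝ] (Fin (finrank ℝ ℓ.ker) → ℝ), ∃ K > 0,
      AntilipschitzWith K fun x => (T x, ℓ x) := by
  obtain ⟨P, hP⟩ := Submodule.ClosedComplemented.of_finiteDimensional ℓ.ker
  let e : ℓ.ker ≃L[ℝ] (Fin (finrank ℝ ℓ.ker) → ℝ) :=
    ContinuousLinearEquiv.ofFinrankEq (finrank_fin_fun ℝ).symm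
  let T : E →L[ℝ] (Fin (finrank ℝ ℓ.ker) → ℝ) := e.toContinuousLinearMap ∘L P
  refine ⟨T, (T.prod ℓ).toLinearMap.injective_iff_antilipschitz.1 ?_⟩
  refine (injective_iff_map_eq_zero _).2 fun x hx => ?_
  have hℓx : ℓ x = 0 := congrArg Prod.snd hx
  have hPx : P x = 0 := e.map_eq_zero_iff.1 (congrArg Prod.fst hx)
  have hx_ker : P x = x := congrArg Subtype.val (hP ⟨x, hℓx⟩)
  rw [← hx_ker, hPx, ZeroMemClass.coe_zero]

end BiLipschitz

section DistLevel

variable {X : Type*} [PseudoMetricSpace X]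

/-- The level set `Σ_β` of the distance to the boundary of `Ω`. -/
def distLevel (Ω : Set X) (β : ℝ) : Set X := {x ∈ Ω | infDist x (frontier Ω) = β}

lemma eventually_distLevel_subset {Ω V : Set X} (hΩ : IsCompact (frontier Ω))
    (hV : V ∈ 𝓝ˢ (frontier Ω)) : ∀ᶠ β in 𝓝[>] 0, distLevel Ω β ⊆ V := by
  obtain ⟨δ, hδ, hδV⟩ := hΩ.exists_thickening_subset_open isOpen_interior
    (subset_interior_iff_mem_nhdsSet.2 hV)
  filter_upwards [Ioo_mem_nhdsGT hδ]
  rintro _ ⟨hβ, hβδ⟩ x ⟨-, rfl⟩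
  have hne : (frontier Ω).Nonempty := by
    by_contra hempty
    rw [not_nonempty_iff_eq_empty.1 hempty, infDist_empty] at hβ
    exact hβ.false
  exact interior_subset (hδV ((mem_thickening_iff_infDist_lt hne).2 hβδ))

variable {E : Type*} [NormedAddCommGroup E] [NormedSpace ℝ E]

lemma ball_infDist_frontier_subset {Ω : Set E} {x : E} (hx : x ∈ Ω) :
    ball x (infDist x (frontier Ω)) ⊆ Ω := by
  set B := ball x (infDist x (frontier Ω))
  have hB : Disjoint B (frontier Ω) := disjoint_ball_infDist
  rcases B.eq_empty_or_nonempty with hempty | hne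
  · simp [hempty]
  have hxB : x ∈ B := mem_ball_self (nonempty_ball.1 hne)
  have hint : ∀ z ∈ closure Ω, z ∈ B → z ∈ interior Ω := fun z hz hzB => by
    by_contra hzi
    exact disjoint_left.1 hB hzB ⟨hz, hzi⟩
  refine ((convex_ball x _).isPreconnected.subset_of_closure_inter_subset isOpen_interior
    ⟨x, hxB, hint x (subset_closure hx) hxB⟩ ?_).trans interior_subset
  exact fun z hz => hint z (closure_mono interior_subset hz.1) hz.2

/-- The regularity of the boundary that the argument uses, a pointwise form of having a `C¹`
boundary: near each boundary point, `Ω` is the strict sublevel set of a function with nonzero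
strict derivative at that point. -/
def HasStrictDiffBoundary (Ω : Set E) : Prop :=
  ∀ p ∈ frontier Ω, ∃ (f : E → ℝ) (ℓ : E →L[ℝ] ℝ),
    HasStrictFDerivAt f ℓ p ∧ ℓ ≠ 0 ∧ ∀ᶠ x in 𝓝 p, x ∈ Ω ↔ f x < 0

lemma HasC2Boundary.hasStrictDiffBoundary {N : ℕ} {Ω : Set (EuclideanSpace ℝ (Fin N))}
    (hΩ : HasC2Boundary Ω) : HasStrictDiffBoundary Ω := by
  intro p hp
  obtain ⟨U, f, hU, hpU, hf, hf', hΩU⟩ := hΩ p hp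
  refine ⟨f, fderiv ℝ f p, (hf.contDiffAt (hU.mem_nhds hpU)).hasStrictFDerivAt two_ne_zero,
    hf' p hpU, ?_⟩
  filter_upwards [hU.mem_nhds hpU] with x hx
  simpa [hx] using Set.ext_iff.1 hΩU x

lemma HasStrictDiffBoundary.isOpen {Ω : Set E} (hΩ : HasStrictDiffBoundary Ω) : IsOpen Ω := by
  refine disjoint_frontier_iff_isOpen.1 (disjoint_left.2 fun p hp hpΩ => ?_)
  obtain ⟨f, ℓ, hf, -, hΩf⟩ := hΩ p hp
  have hneg : ∀ᶠ x in 𝓝 p, f x < 0 :=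
    hf.hasFDerivAt.continuousAt.eventually (gt_mem_nhds (hΩf.self_of_nhds.1 hpΩ))
  exact hp.2 (mem_interior_iff_mem_nhds.2 (by filter_upwards [hΩf, hneg] with x hx using hx.2))

variable {f : E → ℝ} {ℓ : E →L[ℝ] ℝ} {ε : ℝ≥0}

lemma neg_mul_norm_le_of_approximatesLinearOn {W : Set E} (hf : ApproximatesLinearOn f ℓ W ε)
    {x q : E} {β : ℝ} (hβ : β ≠ 0) (hneg : ∀ z ∈ ball x β, z ∈ W ∧ f z < 0) (hqW : q ∈ W)
    (hq : 0 ≤ f q) {z : E} (hz : z ∈ closedBall x β) : -(ε * ‖q - z‖) ≤ ℓ (q - z) := by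
  have hclosed : IsClosed {z | -(ε * ‖q - z‖) ≤ ℓ (q - z)} :=
    isClosed_le (by fun_prop) (by fun_prop)
  rw [← closure_ball x hβ] at hz
  refine closure_minimal (fun w hw => ?_) hclosed hz
  have happrox := (abs_le.1 (hf q hqW w (hneg w hw).1)).2
  have hw0 := (hneg w hw).2
  rw [mem_ofPred_eq]
  linarith

lemma exists_lipschitzOnWith_distLevel_inter [ProperSpace E] {Ω : Set E} (hΩ : IsOpen Ω) {p : E}
    (hp : p ∈ frontier Ω) (hf : HasStrictFDerivAt f ℓ p) (hΩf : ∀ᶠ x in 𝓝 p, x ∈ Ω ↔ f x < 0)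
    (hε : 0 < ε) :
    ∃ V ∈ 𝓝 p, ∀ᶠ β in 𝓝[>] 0, LipschitzOnWith ε ℓ (distLevel Ω β ∩ V) := by
  obtain ⟨W, hW, hfW⟩ := hf.approximates_deriv_on_nhds (.inr hε)
  obtain ⟨r, hr, hball⟩ := Metric.mem_nhds_iff.1 (inter_mem hW hΩf)
  refine ⟨ball p (r / 2), ball_mem_nhds p (half_pos hr), ?_⟩
  filter_upwards [Ioo_mem_nhdsGT (half_pos hr)]
  rintro β ⟨hβ, hβr⟩
  refine LipschitzOnWith.of_le_add_mul ε ?_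
  rintro x ⟨⟨hxΩ, hxβ⟩, hxp⟩ x' ⟨⟨-, hx'β⟩, hx'p⟩
  obtain ⟨q, hq, hx'q⟩ := isClosed_frontier.exists_infDist_eq_dist ⟨p, hp⟩ x'
  have hqβ : dist q x' = β := by rw [dist_comm, ← hx'q, hx'β]
  have hqΩ : q ∉ Ω := fun h => disjoint_left.1 (disjoint_frontier_iff_isOpen.2 hΩ) hq h
  have hqW := hball <|
    closedBall_subset_ball' (by linarith [mem_ball.1 hx'p]) (mem_closedBall.2 hqβ.le)
  have hneg : ∀ z ∈ ball x β, z ∈ W ∧ f z < 0 := fun z hz => by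
    have hzW := hball (ball_subset_ball' (by linarith [mem_ball.1 hxp]) hz)
    exact ⟨hzW.1, hzW.2.1 (ball_infDist_frontier_subset hxΩ (hxβ ▸ hz))⟩
  have hz : x + (q - x') ∈ closedBall x β := by
    rw [mem_closedBall, dist_self_add_left, ← dist_eq_norm, hqβ]
  have hle := neg_mul_norm_le_of_approximatesLinearOn hfW hβ.ne' hneg hqW.1
    (not_lt.1 fun h => hqΩ (hqW.2.2 h)) hz
  rw [show q - (x + (q - x')) = x' - x by abel, map_sub, ← dist_eq_norm, dist_comm] at hle
  linarith

variable [FiniteDimensional ℝ E] [MeasurableSpace E] [BorelSpace E] {Ω : Set E}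

lemma HasStrictDiffBoundary.exists_isUpperAhlforsRegular_distLevel_inter
    (hΩ : HasStrictDiffBoundary Ω) {p : E} (hp : p ∈ frontier Ω) :
    ∃ C, ∃ V ∈ 𝓝 p, ∀ᶠ β in 𝓝[>] 0, IsUpperAhlforsRegular
      ((μH[(finrank ℝ E : ℝ) - 1] : Measure E).restrict (distLevel Ω β ∩ V))
      ((finrank ℝ E : ℝ) - 1) C := by
  have : ProperSpace E := FiniteDimensional.proper_real E
  obtain ⟨f, ℓ, hf, hℓ, hΩf⟩ := hΩ p hp
  have hdim : (finrank ℝ E : ℝ) - 1 = Fintype.card (Fin (finrank ℝ ℓ.ker)) := by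
    have hker : finrank ℝ ℓ.ker + 1 = finrank ℝ E :=
      Module.Dual.finrank_ker_add_one_of_ne_zero (f := ℓ.toLinearMap)
        fun h => hℓ (ContinuousLinearMap.coe_injective h)
    rw [← hker, Fintype.card_fin, Nat.cast_add_one, add_sub_cancel_right]
  obtain ⟨T, K, hK, hT⟩ := exists_antilipschitzWith_prodMk ℓ
  have hKε : K * (2 * K)⁻¹ < 1 := by
    rw [mul_inv_rev, mul_inv_cancel_left₀ hK.ne']
    norm_num
  obtain ⟨V, hV, hlip⟩ := exists_lipschitzOnWith_distLevel_inter hΩ.isOpen hp hf hΩf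
    (ε := (2 * K)⁻¹) (by positivity)
  rw [hdim]
  exact ⟨_, V, hV, hlip.mono fun β hβ => isUpperAhlforsRegular_hausdorffMeasure_restrict
    T.lipschitz (antilipschitzWith_domRestrict_of_prodMk hT hβ hKε)⟩

lemma HasStrictDiffBoundary.exists_isUpperAhlforsRegular_distLevel (hΩ : HasStrictDiffBoundary Ω)
    (hΩc : IsCompact (frontier Ω)) :
    ∃ C, ∀ᶠ β in 𝓝[>] 0, IsUpperAhlforsRegular
      ((μH[(finrank ℝ E : ℝ) - 1] : Measure E).restrict (distLevel Ω β))
      ((finrank ℝ E : ℝ) - 1) C := by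
  obtain ⟨C, V, hV, hC⟩ :=
    IsUpperAhlforsRegular.exists_eventually_restrict_inter_of_isCompact hΩc
      fun p hp => hΩ.exists_isUpperAhlforsRegular_distLevel_inter hp
  refine ⟨C, ?_⟩
  filter_upwards [hC, eventually_distLevel_subset hΩc hV] with β hβ hβV
  rwa [inter_eq_left.2 hβV] at hβ

theorem stmt13_general (hΩ : HasStrictDiffBoundary Ω) (hΩc : IsCompact (frontier Ω)) {s : ℝ}
    (hs : 0 < (finrank ℝ E : ℝ) - 1 + s) :
    ∃ c : ℝ, 0 < c ∧ ∃ β₀ : ℝ, 0 < β₀ ∧ ∀ β ∈ Ioo 0 β₀, ∀ y : E, ∀ R > 0,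
      ∫⁻ x in distLevel Ω β ∩ ball y R, ENNReal.ofReal (dist x y ^ s)
          ∂(μH[(finrank ℝ E : ℝ) - 1]) ≤
        ENNReal.ofReal (c * R ^ ((finrank ℝ E : ℝ) - 1 + s)) := by
  obtain ⟨C, hC⟩ := hΩ.exists_isUpperAhlforsRegular_distLevel hΩc
  obtain ⟨β₀, hβ₀, hreg⟩ := mem_nhdsGT_iff_exists_Ioo_subset.1 hC
  set p := (finrank ℝ E : ℝ) - 1 + s
  have hp : 0 < 1 - (1 / 2 : ℝ) ^ p :=
    sub_pos.2 (Real.rpow_lt_one (by norm_num) (by norm_num) hs)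
  refine ⟨(C + 1) * (2 ^ |s| / (1 - (1 / 2) ^ p)), by positivity, β₀, hβ₀, fun β hβ y R hR => ?_⟩
  calc ∫⁻ x in distLevel Ω β ∩ ball y R, ENNReal.ofReal (dist x y ^ s)
        ∂(μH[(finrank ℝ E : ℝ) - 1])
      ≤ C * ENNReal.ofReal (2 ^ |s| / (1 - (1 / 2) ^ p) * R ^ p) := by
        rw [inter_comm, ← Measure.restrict_restrict measurableSet_ball]
        exact (hreg hβ).lintegral_ball_dist_rpow_le hs y hR
    _ ≤ ENNReal.ofReal ((C + 1) * (2 ^ |s| / (1 - (1 / 2) ^ p)) * R ^ p) := by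
        rw [← ENNReal.ofReal_coe_nnreal, ← ENNReal.ofReal_mul C.coe_nonneg, mul_assoc]
        gcongr
        linarith

end DistLevel

theorem stmt13 {N : ℕ} (hN : 3 ≤ N) (Ω : Set (EuclideanSpace ℝ (Fin N)))
    (hΩo : IsOpen Ω) (hΩb : Bornology.IsBounded Ω) (hΩ2 : HasC2Boundary Ω)
    (a : ℝ) (ha : 1 ≤ a) :
    ∃ c : ℝ, 0 < c ∧ ∃ β₀ : ℝ, 0 < β₀ ∧
      ∀ β ∈ Set.Ioo (0:ℝ) β₀, ∀ y : EuclideanSpace ℝ (Fin N),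
        (∫⁻ x in {x ∈ Ω | Metric.infDist x (frontier Ω) = β} ∩ {x | dist x y < a * β},
          ENNReal.ofReal (dist x y ^ ((2:ℝ) - N)) ∂(μH[(N:ℝ) - 1])) ≤
        ENNReal.ofReal (c * β) := by
  obtain ⟨c, hc, β₀, hβ₀, h⟩ := stmt13_general hΩ2.hasStrictDiffBoundary
    (hΩb.isCompact_closure.of_isClosed_subset isClosed_frontier frontier_subset_closure)
    (s := 2 - N) (by simp)
  exact ⟨c * a, by positivity, β₀, hβ₀, fun β hβ y => by
    simpa [distLevel, ball, mul_assoc, show (2 : ℝ) - 1 = 1 by norm_num] using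
      h β hβ y (a * β) (mul_pos (by linarith) hβ.1)⟩
end
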